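/- arXiv:1907.05016 — 5 statements merged into one kernel-verified Lean document; each statement's English description precedes it below -/
import Mathlib

section
/- For every real p ∈ (0,1) and every positive integer m, setting q = 1 - (1-p)^m, if q ≤ 1/6 then m·p·(1-p)^{m-1} > q(1-q). -/
/-- For every real `p ∈ (0,1)` and every positive integer `m`,
setting `q = 1 - (1-p)^m`, if `q ≤ 1/6` then `m·p·(1-p)^(m-1) > q(1-q)`. -/
theorem stmt_1 (p : ℝ) (hp0 : 0 < p) (hp1 : p < 1) (m : ℕ) (hm : 0 < m)
    (q : ℝ) (hq : q = 1 - (1 - p) ^ m) (hq6 : q ≤ 1 / 6) :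
    (m : ℝ) * p * (1 - p) ^ (m - 1) > q * (1 - q) := by
  have hb := one_add_mul_le_pow (a := -p) (by linarith) m
  have e : (1 + -p) = 1 - p := by ring
  rw [e] at hb
  have hle : q ≤ m * p := by rw [hq]; linarith
  have h1 : (1 - p) ^ m = (1 - p) ^ (m - 1) * (1 - p) := by
    rw [← pow_succ, Nat.sub_add_cancel hm]
  have hr : 0 < (1 - p) ^ (m - 1) := pow_pos (by linarith) _
  have hM : (0 : ℝ) < m := by exact_mod_cast hm
  have h2 : 1 - q = (1 - p) ^ (m - 1) * (1 - p) := by rw [← h1, hq]; ring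
  have h3 : 0 ≤ 1 - q := by linarith
  have h4 := mul_le_mul_of_nonneg_right hle h3
  have h5 : 0 < m * p * (1 - p) ^ (m - 1) * p := by positivity
  have h6 : m * p * (1 - q) = m * p * (1 - p) ^ (m - 1) - m * p * (1 - p) ^ (m - 1) * p := by
    rw [h2]; ring
  linarith
end

section
/- Let n > t ≥ 0 be integers with β = t/n < 1/2, let ξ = (1-2β)/(1-β), let p ∈ (0,1), and let q = 1 - (1-p)^{n-t}. If q ≤ ξ/6, then p·t < q. -/
/-- Let `n > t ≥ 0` be integers with `β = t/n < 1/2`, let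
`ξ = (1-2β)/(1-β)`, let `p ∈ (0,1)`, and let `q = 1 - (1-p)^(n-t)`.
If `q ≤ ξ/6`, then `p·t < q`. -/
theorem stmt_2 (n t : ℕ) (hnt : t < n)
    (β : ℝ) (hβ : β = (t : ℝ) / n) (hβhalf : β < 1 / 2)
    (ξ : ℝ) (hξ : ξ = (1 - 2 * β) / (1 - β))
    (p : ℝ) (hp0 : 0 < p) (hp1 : p < 1)
    (q : ℝ) (hq : q = 1 - (1 - p) ^ (n - t)) (hq6 : q ≤ ξ / 6) :
    p * t < q := by
  obtain ⟨m, rfl⟩ : ∃ m, n = t + m := ⟨n - t, by omega⟩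
  have hm : 0 < m := by omega
  have hmR : (0 : ℝ) < m := by exact_mod_cast hm
  have ht : (0 : ℝ) ≤ t := Nat.cast_nonneg t
  rw [Nat.add_sub_cancel_left] at hq
  have hξ2 : (t : ℝ) = m * (1 - ξ) := by
    have h1 : (t : ℝ) + m ≠ 0 := by positivity
    have h2 : 1 - β = m / ((t : ℝ) + m) := by
      rw [hβ]; push_cast; field_simp; ring
    have h3 : 1 - 2 * β = (m - t) / ((t : ℝ) + m) := by
      rw [hβ]; push_cast; field_simp; ring
    rw [hξ, h2, h3]
    field_simp
    ring
  have hpos : 0 < (1 - p) ^ m := pow_pos (by linarith) m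
  have hlt : (1 - p) ^ m < 1 := pow_lt_one₀ (by linarith) (by linarith) (by omega)
  have hb : 1 + (m : ℝ) * p ≤ (1 + p) ^ m := one_add_mul_le_pow (by linarith) m
  have hprod : (1 - p) ^ m * (1 + p) ^ m ≤ 1 := by
    rw [← mul_pow]
    exact pow_le_one₀ (by nlinarith) (by nlinarith)
  have h4 : (1 - q) * (1 + m * p) ≤ 1 := by
    have : 1 - q = (1 - p) ^ m := by rw [hq]; ring
    rw [this]
    exact (mul_le_mul_of_nonneg_left hb hpos.le).trans hprod
  have hq0 : 0 < q := by linarith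
  have hq1 : 0 < 1 - q := by linarith
  have hx : 0 ≤ 1 - ξ := by
    by_contra h
    push Not at h
    nlinarith
  have h5 : m * p * (1 - q) * (1 - ξ) ≤ q * (1 - ξ) :=
    mul_le_mul_of_nonneg_right (by linarith) hx
  have h6 : q * (1 - ξ) < q * (1 - q) :=
    mul_lt_mul_of_pos_left (by linarith) hq0
  have h7 : (p * t) * (1 - q) < q * (1 - q) := by
    rw [hξ2]; linarith
  exact lt_of_mul_lt_mul_right h7 hq1.le
end

section
/- Let n > t ≥ 0 be integers with β = t/n < 1/2, ξ = (1-2β)/(1-β), p ∈ (0,1), q = 1 - (1-p)^{n-t}, and assume q ≤ ξ/6. Let N > 0 be a real number and let x, y, z be real numbers satisfying: (1-ξ/6)qN < x < (1+ξ/6)qN; y > (1-ξ/6)·(n-t)p(1-p)^{n-t-1}·N; and z < p·t·N + (ξ/6)qN. Then: (i) y > (1-ξ/3)qN; (ii) z < (1-2ξ/3)qN; (iii) z < (1-ξ/2)x; and (iv) z < y. -/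
theorem aux_upper (p : ℝ) (hp0 : 0 < p) (hp1 : p < 1) (k : ℕ) :
    ((k : ℝ) + 1) * p * (1 - p) ^ k ≤ 1 - (1 - p) ^ (k + 1) := by
  induction k with
  | zero => simp
  | succ k ih =>
    have ha : 0 < (1 - p) ^ k := pow_pos (by linarith) k
    have h2 : 0 ≤ ((k : ℝ) + 1) * p * (1 - p) ^ k * p := by positivity
    push_cast
    rw [pow_succ (1 - p) (k + 1)]
    rw [pow_succ (1 - p) k] at ih ⊢
    nlinarith

/-- deterministic content of the Typical Properties Lemma:
Let `n > t ≥ 0` with `β = t/n < 1/2`, `ξ = (1-2β)/(1-β)`, `p ∈ (0,1)`,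
`q = 1-(1-p)^(n-t)`, `q ≤ ξ/6`.  Let `N > 0` and reals `x, y, z` satisfying
`(1-ξ/6)qN < x < (1+ξ/6)qN`, `y > (1-ξ/6)(n-t)p(1-p)^(n-t-1)N`, and
`z < p·t·N + (ξ/6)qN`.  Then (i) `y > (1-ξ/3)qN`; (ii) `z < (1-2ξ/3)qN`;
(iii) `z < (1-ξ/2)x`; (iv) `z < y`. -/
theorem stmt_8 (n t : ℕ) (hnt : t < n)
    (β : ℝ) (hβ : β = (t : ℝ) / n) (hβhalf : β < 1 / 2)
    (ξ : ℝ) (hξ : ξ = (1 - 2 * β) / (1 - β))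
    (p : ℝ) (hp0 : 0 < p) (hp1 : p < 1)
    (q : ℝ) (hq : q = 1 - (1 - p) ^ (n - t)) (hq6 : q ≤ ξ / 6)
    (N : ℝ) (hN : 0 < N) (x y z : ℝ)
    (hx1 : (1 - ξ / 6) * q * N < x) (hx2 : x < (1 + ξ / 6) * q * N)
    (hy : y > (1 - ξ / 6) * (((n : ℝ) - t) * p * (1 - p) ^ (n - t - 1)) * N)
    (hz : z < p * t * N + (ξ / 6) * q * N) :
    y > (1 - ξ / 3) * q * N ∧
    z < (1 - 2 * ξ / 3) * q * N ∧
    z < (1 - ξ / 2) * x ∧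
    z < y := by
  obtain ⟨k, hk⟩ : ∃ k, n = t + (k + 1) := ⟨n - t - 1, by omega⟩
  have e1 : n - t = k + 1 := by omega
  have e2 : n - t - 1 = k := by omega
  have e3 : (n : ℝ) - t = (k : ℝ) + 1 := by rw [hk]; push_cast; ring
  rw [e2, e3] at hy
  rw [e1] at hq
  have hm : (0 : ℝ) < (k : ℝ) + 1 := by positivity
  have ht0 : (0 : ℝ) ≤ t := Nat.cast_nonneg t
  have hn : (n : ℝ) = t + (k + 1) := by linarith
  have hn0 : (0 : ℝ) < n := by linarith
  have hb : 1 - β = ((k : ℝ) + 1) / n := by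
    rw [hβ]; field_simp; linarith
  have hbpos : 0 < 1 - β := by linarith
  have hξ0 : 0 < ξ := by rw [hξ]; apply div_pos <;> linarith
  have hβ0 : 0 ≤ β := by rw [hβ]; positivity
  have hξ1 : ξ ≤ 1 := by rw [hξ, div_le_one hbpos]; linarith
  have ht : (t : ℝ) = (1 - ξ) * (k + 1) := by
    have h1 : ξ * (1 - β) = 1 - 2 * β := by rw [hξ]; field_simp
    have h2 : β * n = t := by rw [hβ]; field_simp
    have h3 : (1 - β) * n = k + 1 := by rw [hb]; field_simp
    rw [← h3, ← h2]
    linear_combination (n : ℝ) * h1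
  have hup := aux_upper p hp0 hp1 k
  have hber := one_add_mul_le_pow (a := -p) (by linarith) (k + 1)
  push_cast at hber
  have e4 : 1 + -p = 1 - p := by ring
  rw [e4] at hber
  have ha : 0 < (1 - p) ^ k := pow_pos (by linarith) k
  have hak : 1 - q ≤ (1 - p) ^ k := by
    rw [hq, pow_succ]; nlinarith
  have hq0 : 0 < q := lt_of_lt_of_le (by positivity) (hup.trans hq.ge)
  obtain ⟨u, hu⟩ : ∃ u, u = ((k : ℝ) + 1) * p := ⟨_, rfl⟩
  rw [← hu] at hy hup
  have hu0 : 0 < u := by rw [hu]; positivity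
  have hqu : q ≤ u := by rw [hq, hu]; linarith
  rw [← hq] at hup
  have hptu : p * t = (1 - ξ) * u := by rw [ht, hu]; ring
  rw [hptu] at hz
  have hc : 1 - ξ / 6 ≤ (1 - p) ^ k := by linarith
  have hA : q * (1 - ξ / 6) ≤ u * (1 - p) ^ k :=
    mul_le_mul hqu hc (by linarith) hu0.le
  have hB : u * (1 - ξ / 6) ≤ q := (mul_le_mul_of_nonneg_left hc hu0.le).trans hup
  have hqN : 0 < q * N := mul_pos hq0 hN
  have hξξ : 0 ≤ ξ ^ 2 * (q * N) := by positivity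
  have i1 : (1 - ξ / 3) * q * N < y := by
    have h1 : (1 - ξ / 6) * (q * (1 - ξ / 6)) * N ≤ (1 - ξ / 6) * (u * (1 - p) ^ k) * N :=
      mul_le_mul_of_nonneg_right (mul_le_mul_of_nonneg_left hA (by linarith)) hN.le
    linarith
  have i2 : z < (1 - 2 * ξ / 3) * q * N := by
    have h1 : (1 - 5 * ξ / 6) * (u * (1 - ξ / 6)) ≤ (1 - 5 * ξ / 6) * q :=
      mul_le_mul_of_nonneg_left hB (by linarith)
    have h2 : 0 ≤ ξ ^ 2 * u := by positivity
    have h3 : (1 - ξ) * u ≤ (1 - 5 * ξ / 6) * q := by linarith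
    have h4 := mul_le_mul_of_nonneg_right h3 hN.le
    linarith
  refine ⟨i1, i2, ?_, ?_⟩
  · have h1 : (1 - ξ / 2) * ((1 - ξ / 6) * q * N) < (1 - ξ / 2) * x :=
      mul_lt_mul_of_pos_left hx1 (by linarith)
    linarith
  · have := mul_pos hξ0 hqN
    linarith
end

section
/- Let n > t ≥ 0 be integers with β = t/n < 1/2, ξ = (1-2β)/(1-β), let T ≥ 1 be an integer, let p ∈ (0,1), and let q = 1 - (1-p)^{n-t}. If q ≤ ξ/(20T), then p·t < q(1 - Tq) ≤ (n-t)p(1-p)^{n-t-1}(1-q)^{T-1}. -/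
/-- Let `n > t ≥ 0` be integers with `β = t/n < 1/2`,
`ξ = (1-2β)/(1-β)`, let `T ≥ 1` be an integer, let `p ∈ (0,1)`, and let
`q = 1 - (1-p)^(n-t)`.  If `q ≤ ξ/(20T)`, then
`p·t < q(1 - Tq) ≤ (n-t)p(1-p)^(n-t-1)(1-q)^(T-1)`. -/
theorem stmt_11 (n t : ℕ) (hnt : t < n)
    (β : ℝ) (hβ : β = (t : ℝ) / n) (hβhalf : β < 1 / 2)
    (ξ : ℝ) (hξ : ξ = (1 - 2 * β) / (1 - β))
    (T : ℕ) (hT : 1 ≤ T)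
    (p : ℝ) (hp0 : 0 < p) (hp1 : p < 1)
    (q : ℝ) (hq : q = 1 - (1 - p) ^ (n - t)) (hq20T : q ≤ ξ / (20 * T)) :
    p * t < q * (1 - T * q) ∧
    q * (1 - T * q) ≤ ((n : ℝ) - t) * p * (1 - p) ^ (n - t - 1) * (1 - q) ^ (T - 1) := by
  obtain ⟨m, rfl⟩ : ∃ m, n = t + m := ⟨n - t, by omega⟩
  have hm : 1 ≤ m := by omega
  have e : t + m - t = m := by omega
  rw [e] at hq ⊢
  have hm' : (1 : ℝ) ≤ m := by exact_mod_cast hm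
  have hT' : (1 : ℝ) ≤ T := by exact_mod_cast hT
  have ht' : (0 : ℝ) ≤ t := Nat.cast_nonneg t
  have hξ' : ξ * m = m - t := by
    have h1 : (0 : ℝ) < (t : ℝ) + m := by linarith
    have h2 : (1 : ℝ) - β ≠ 0 := by linarith
    have h3 : β * (t + m) = t := by
      rw [hβ]; push_cast; field_simp
    have h4 : ξ * (1 - β) = 1 - 2 * β := by rw [hξ]; field_simp
    have h5 : (m : ℝ) = (1 - β) * (t + m) := by linarith
    calc ξ * m = (ξ * (1 - β)) * (t + m) := by rw [mul_assoc, ← h5]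
      _ = (1 - 2 * β) * (t + m) := by rw [h4]
      _ = m - t := by linarith
  have hξ0 : 0 < ξ := by
    rw [hξ]; apply div_pos <;> linarith
  have hTq : T * q ≤ ξ / 20 := by
    rw [le_div_iff₀ (by positivity)] at hq20T
    linarith
  have hpow : (1 - p) ^ m = 1 - q := by linarith
  have hr0 : 0 < 1 - q := by rw [← hpow]; exact pow_pos (by linarith) m
  have hr1 : 1 - q < 1 := by
    rw [← hpow]; exact pow_lt_one₀ (by linarith) (by linarith) (by omega)
  have hq0 : 0 < q := by linarith
  have hqT : q ≤ T * q := by nlinarith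
  have hub : q ≤ m * p := by
    have := one_add_mul_le_pow (a := -p) (by linarith) m
    rw [← sub_eq_add_neg, hpow] at this
    linarith
  have hlb : m * p * (1 - q) ≤ q := by
    have h1 := one_add_mul_le_pow (a := p) (by linarith) m
    have h2 : (1 - p) ^ m * (1 + p) ^ m ≤ 1 := by
      rw [← mul_pow]; exact pow_le_one₀ (by nlinarith) (by nlinarith)
    rw [hpow] at h2
    nlinarith
  constructor
  · have h1 : p * t = m * p * (1 - ξ) := by
      have : (t : ℝ) = m - ξ * m := by linarith
      rw [this]; ring
    have hmp : 0 < m * p := by positivity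
    have h2 : 1 - ξ < (1 - q) * (1 - T * q) := by
      have : 0 < q * (T * q) := by positivity
      nlinarith
    have hξ1 : ξ ≤ 1 := by nlinarith
    calc p * t = m * p * (1 - ξ) := h1
      _ < m * p * ((1 - q) * (1 - T * q)) := mul_lt_mul_of_pos_left h2 hmp
      _ = (m * p * (1 - q)) * (1 - T * q) := by ring
      _ ≤ q * (1 - T * q) := mul_le_mul_of_nonneg_right hlb (by linarith)
  · have h1 : 1 - T * q ≤ (1 - q) ^ T := by
      have := one_add_mul_le_pow (a := -q) (by linarith) T
      rw [← sub_eq_add_neg] at this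
      linarith
    have h2 : 1 - q ≤ (1 - p) ^ (m - 1) := by
      rw [← hpow]; exact pow_le_pow_of_le_one (by linarith) (by linarith) (by omega)
    have h3 : (1 - q) ^ T = (1 - q) * (1 - q) ^ (T - 1) := by
      rw [← pow_succ']; congr 1; omega
    have h4 : 0 ≤ (1 - q) ^ (T - 1) := by positivity
    have h5 : 0 ≤ (1 - q) ^ T := by positivity
    calc q * (1 - T * q) ≤ q * (1 - q) ^ T := mul_le_mul_of_nonneg_left h1 hq0.le
      _ ≤ m * p * (1 - q) ^ T := mul_le_mul_of_nonneg_right hub h5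
      _ = m * p * ((1 - q) * (1 - q) ^ (T - 1)) := by rw [h3]
      _ ≤ m * p * ((1 - p) ^ (m - 1) * (1 - q) ^ (T - 1)) :=
          mul_le_mul_of_nonneg_left (mul_le_mul_of_nonneg_right h2 h4) (by positivity)
      _ = _ := by push_cast; ring
end

section
/- Let β ∈ [0, 1/2), ξ = (1-2β)/(1-β), let T ≥ 1 be an integer, let q ∈ (0,1) with q ≤ ξ/(20T), and let N be a real number with N > 2/q. Suppose real numbers x', y', z, z⁺, z± satisfy: x' ≥ (1-ξ/20)·q(1-q)^T·N; y' ≥ (1-ξ/20)·q·(1-(2T-1)q)·N; z ≤ (1-ξ)·q/(1-q)·N + (ξ/20)·q·N; z⁺ ≤ (1-ξ)·q/(1-q)·(N+T) + (ξ/20)·q(1-q)^T·(N+T); and z± ≤ (1-2ξ/3)·q·(N+2T). Then: (i) y' > (1-ξ/3)qN; (ii) z < (1-2ξ/3)qN; (iii) z⁺ < (1-ξ/2)·x'; and (iv) z± < y'. -/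
theorem aux1 (ξ : ℝ) (h : 0 < ξ) :
    (1 - 17 * ξ / 20) * (1 + ξ / 40) < (1 - ξ / 2) * (1 - ξ / 20) := by
  linarith [sq_nonneg ξ]

theorem aux2 (ξ : ℝ) (h : 0 < ξ) :
    (1 - 2 * ξ / 3) * (1 + ξ / 20) < 1 - 3 * ξ / 20 := by
  linarith [sq_nonneg ξ]

set_option maxHeartbeats 1000000 in
/-- deterministic content of the Typical Properties Lemma for the
bounded-delay model: Let `β ∈ [0,1/2)`, `ξ = (1-2β)/(1-β)`, `T ≥ 1` an integer,
`q ∈ (0,1)` with `q ≤ ξ/(20T)`, and `N > 2/q` a real.  Suppose reals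
`x', y', z, z⁺, z±` satisfy the listed bounds.  Then (i) `y' > (1-ξ/3)qN`;
(ii) `z < (1-2ξ/3)qN`; (iii) `z⁺ < (1-ξ/2)x'`; (iv) `z± < y'`. -/
theorem stmt_18 (β : ℝ) (hβ0 : 0 ≤ β) (hβhalf : β < 1 / 2)
    (ξ : ℝ) (hξ : ξ = (1 - 2 * β) / (1 - β))
    (T : ℕ) (hT : 1 ≤ T)
    (q : ℝ) (hq0 : 0 < q) (hq1 : q < 1) (hq20T : q ≤ ξ / (20 * T))
    (N : ℝ) (hN : N > 2 / q)
    (x' y' z zplus zpm : ℝ)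
    (hx' : x' ≥ (1 - ξ / 20) * (q * (1 - q) ^ T) * N)
    (hy' : y' ≥ (1 - ξ / 20) * (q * (1 - (2 * (T : ℝ) - 1) * q)) * N)
    (hz : z ≤ (1 - ξ) * (q / (1 - q)) * N + (ξ / 20) * q * N)
    (hzplus : zplus ≤ (1 - ξ) * (q / (1 - q)) * (N + T) + (ξ / 20) * (q * (1 - q) ^ T) * (N + T))
    (hzpm : zpm ≤ (1 - 2 * ξ / 3) * q * (N + 2 * T)) :
    y' > (1 - ξ / 3) * q * N ∧
    z < (1 - 2 * ξ / 3) * q * N ∧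
    zplus < (1 - ξ / 2) * x' ∧
    zpm < y' := by
  have hb : 0 < 1 - β := by linarith
  have hx0 : 0 < ξ := by rw [hξ]; exact div_pos (by linarith) hb
  have hx1 : ξ ≤ 1 := by rw [hξ, div_le_one hb]; linarith
  have ht : (1 : ℝ) ≤ T := by exact_mod_cast hT
  have ha : q * T ≤ ξ / 20 := by
    rw [le_div_iff₀ (by linarith)] at hq20T
    linarith
  have hqt : q ≤ q * T := by nlinarith
  have hqN : 2 < q * N := by
    have h := (div_lt_iff₀ hq0).1 hN
    linarith
  have hN0 : 0 < N := lt_trans (by positivity) hN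
  have hTN : (T : ℝ) ≤ ξ / 40 * N := by
    have h1 : q * T ≤ q * (ξ / 40 * N) := by nlinarith
    exact le_of_mul_le_mul_left h1 hq0
  have hq' : 0 < 1 - q := by linarith
  have hqN0 : 0 < q * N := by linarith
  have hxqN : 0 < ξ * (q * N) := by positivity
  have hy : (1 - 3 * ξ / 20) * (q * N) ≤ y' := by
    have h1 : 1 - 3 * ξ / 20 ≤ (1 - ξ / 20) * (1 - (2 * (T : ℝ) - 1) * q) := by
      have h2 : 1 - ξ / 10 ≤ 1 - (2 * (T : ℝ) - 1) * q := by nlinarith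
      have h3 := mul_le_mul_of_nonneg_left h2 (show 0 ≤ 1 - ξ / 20 by linarith)
      nlinarith
    have h4 := mul_le_mul_of_nonneg_right h1 hqN0.le
    linarith
  have hP : 1 - ξ / 10 ≤ (1 - q) * (1 - q) ^ T := by
    have h := one_add_mul_le_pow (show (-2 : ℝ) ≤ -q by linarith) (T + 1)
    push_cast at h
    rw [pow_succ, ← sub_eq_add_neg] at h
    linarith
  have hP0 : 0 < (1 - q) ^ T := by positivity
  have hc : (1 - ξ) / (1 - q) ≤ (1 - 9 * ξ / 10) * (1 - q) ^ T := by
    rw [div_le_iff₀ hq']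
    have h := mul_le_mul_of_nonneg_left hP (show 0 ≤ 1 - 9 * ξ / 10 by linarith)
    nlinarith
  have hc2 : (1 - ξ) / (1 - q) ≤ 1 - 9 * ξ / 10 := by
    rw [div_le_iff₀ hq']
    nlinarith
  refine ⟨by linarith, ?_, ?_, ?_⟩
  · have h := mul_le_mul_of_nonneg_right hc2 hqN0.le
    have e : (1 - ξ) * (q / (1 - q)) * N = (1 - ξ) / (1 - q) * (q * N) := by ring
    rw [e] at hz
    linarith
  · set P := (1 - q) ^ T
    have e : (1 - ξ) * (q / (1 - q)) * (N + T) = (1 - ξ) / (1 - q) * (q * (N + T)) := by ring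
    rw [e] at hzplus
    have h := mul_le_mul_of_nonneg_right hc (show 0 ≤ q * (N + T) by positivity)
    have h1 : zplus ≤ (1 - 17 * ξ / 20) * (q * P) * (N + T) := by linarith
    have h2 : (1 - 17 * ξ / 20) * (q * P) * (N + T)
        ≤ (1 - 17 * ξ / 20) * (q * P) * ((1 + ξ / 40) * N) := by
      apply mul_le_mul_of_nonneg_left (by linarith)
      exact mul_nonneg (by linarith) (by positivity)
    have h3 : (1 - ξ / 2) * ((1 - ξ / 20) * (q * P) * N) ≤ (1 - ξ / 2) * x' :=
      mul_le_mul_of_nonneg_left hx' (by linarith)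
    have h4 : (1 - 17 * ξ / 20) * (1 + ξ / 40) < (1 - ξ / 2) * (1 - ξ / 20) := aux1 ξ hx0
    have h5 := mul_lt_mul_of_pos_right h4 (show 0 < q * P * N by positivity)
    linarith
  · have h2 : (1 - 2 * ξ / 3) * q * (N + 2 * T) ≤ (1 - 2 * ξ / 3) * q * ((1 + ξ / 20) * N) := by
      apply mul_le_mul_of_nonneg_left (by linarith)
      exact mul_nonneg (by linarith) hq0.le
    have h4 : (1 - 2 * ξ / 3) * (1 + ξ / 20) < 1 - 3 * ξ / 20 := aux2 ξ hx0
    have h5 := mul_lt_mul_of_pos_right h4 hqN0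
    linarith
end
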